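/- Let q be odd. The minimum distance of the skew determinantal code C_A(2t,m) equals (q^{m-2t} - 1) q^{m+2t-4} n_a(2t-2, m-2) + q^{m-2} N_a(2t-2, m-1). -/

import Mathlib

open Matrix
def IsSkewSym {K : Type} [Field K] {m : ℕ} (A : Matrix (Fin m) (Fin m) K) : Prop :=
  Aᵀ = -A ∧ ∀ i, A i i = 0

def Estd (K : Type) [Field K] (k m : ℕ) : Matrix (Fin m) (Fin m) K :=
  Matrix.of fun i j =>
    if j.val = i.val + 1 ∧ i.val % 2 = 0 ∧ j.val < 2*k then 1
    else if i.val = j.val + 1 ∧ j.val % 2 = 0 ∧ i.val < 2*k then -1 else 0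

noncomputable def na (K : Type) [Field K] (r m : ℕ) : ℕ :=
  Nat.card {A : Matrix (Fin m) (Fin m) K // IsSkewSym A ∧ A.rank = r}

noncomputable def Na (K : Type) [Field K] (r m : ℕ) : ℕ :=
  Nat.card {A : Matrix (Fin m) (Fin m) K // IsSkewSym A ∧ A.rank ≤ r}

noncomputable def wSmall (K : Type) [Field K] (k r m : ℕ) : ℕ :=
  Nat.card {A : Matrix (Fin m) (Fin m) K //
    IsSkewSym A ∧ A.rank = 2*r ∧ Matrix.trace (Estd K k m * A) ≠ 0}

noncomputable def Wcap (K : Type) [Field K] (k t m : ℕ) : ℕ :=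
  Nat.card {A : Matrix (Fin m) (Fin m) K //
    IsSkewSym A ∧ A.rank ≤ 2*t ∧ Matrix.trace (Estd K k m * A) ≠ 0}

noncomputable def projWt (K : Type) [Field K] (m t : ℕ)
    (φ : Matrix (Fin m) (Fin m) K →ₗ[K] K) : ℕ :=
  Nat.card {x : Projectivization K (Matrix (Fin m) (Fin m) K) //
    ∃ (A : Matrix (Fin m) (Fin m) K) (h : A ≠ 0),
      x = Projectivization.mk K A h ∧ IsSkewSym A ∧ A.rank ≤ 2*t ∧ φ A ≠ 0}

open Module

section Bordering

variable {K : Type} [Field K]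

/-- The skew-symmetric matrix obtained from `A` by adding a first column `u` and a first
row `-u`. -/
def border {n : ℕ} (A : Matrix (Fin n) (Fin n) K) (u : Fin n → K) :
    Matrix (Fin (n + 1)) (Fin (n + 1)) K :=
  Matrix.of (Fin.cons (Fin.cons 0 (-u)) fun i => Fin.cons (u i) (A i))

@[simp] theorem border_zero_zero {n : ℕ} (A : Matrix (Fin n) (Fin n) K) (u : Fin n → K) :
    border A u 0 0 = 0 := rfl

@[simp] theorem border_zero_succ {n : ℕ} (A : Matrix (Fin n) (Fin n) K) (u : Fin n → K)
    (j : Fin n) : border A u 0 j.succ = -u j := rfl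

@[simp] theorem border_succ_zero {n : ℕ} (A : Matrix (Fin n) (Fin n) K) (u : Fin n → K)
    (i : Fin n) : border A u i.succ 0 = u i := rfl

@[simp] theorem border_succ_succ {n : ℕ} (A : Matrix (Fin n) (Fin n) K) (u : Fin n → K)
    (i j : Fin n) : border A u i.succ j.succ = A i j := rfl

theorem IsSkewSym.apply_swap {n : ℕ} {A : Matrix (Fin n) (Fin n) K} (hA : IsSkewSym A)
    (i j : Fin n) : A j i = -A i j :=
  congrFun (congrFun hA.1 i) j

theorem isSkewSym_border {n : ℕ} {A : Matrix (Fin n) (Fin n) K} (hA : IsSkewSym A)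
    (u : Fin n → K) : IsSkewSym (border A u) := by
  constructor
  · ext i j
    cases i using Fin.cases <;> cases j using Fin.cases <;> simp
    exact hA.apply_swap _ _
  · intro i
    cases i using Fin.cases <;> simp [hA.2]

theorem IsSkewSym.submatrix {n k : ℕ} {A : Matrix (Fin n) (Fin n) K} (hA : IsSkewSym A)
    (f : Fin k → Fin n) : IsSkewSym (A.submatrix f f) :=
  ⟨by rw [Matrix.transpose_submatrix, hA.1]; rfl, fun _ => hA.2 _⟩

theorem IsSkewSym.border_submatrix {n : ℕ} {A : Matrix (Fin (n + 1)) (Fin (n + 1)) K}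
    (hA : IsSkewSym A) :
    border (A.submatrix Fin.succ Fin.succ) (fun i => A i.succ 0) = A := by
  ext i j
  cases i using Fin.cases <;> cases j using Fin.cases <;> simp [hA.2]
  exact (hA.apply_swap _ _).symm

theorem border_mulVec_cons {n : ℕ} (A : Matrix (Fin n) (Fin n) K) (u : Fin n → K) (c : K)
    (v : Fin n → K) :
    border A u *ᵥ (Fin.cons c v : Fin (n + 1) → K)
      = (Fin.cons (-(u ⬝ᵥ v)) (c • u + A *ᵥ v) : Fin (n + 1) → K) := by
  ext i
  cases i using Fin.cases <;>
    simp [Matrix.mulVec, dotProduct, Fin.sum_univ_succ, mul_comm]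

theorem IsSkewSym.dotProduct_mulVec {n : ℕ} {A : Matrix (Fin n) (Fin n) K}
    (hA : IsSkewSym A) (x y : Fin n → K) : x ⬝ᵥ A *ᵥ y = -(y ⬝ᵥ A *ᵥ x) := by
  rw [Matrix.dotProduct_mulVec, ← Matrix.mulVec_transpose, hA.1, Matrix.neg_mulVec,
    neg_dotProduct, dotProduct_comm]

theorem IsSkewSym.dotProduct_mulVec_self {n : ℕ} {A : Matrix (Fin n) (Fin n) K}
    (hA : IsSkewSym A) (x : Fin n → K) : x ⬝ᵥ A *ᵥ x = 0 := by
  simp only [dotProduct, Matrix.mulVec, Finset.mul_sum, ← Finset.sum_product']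
  refine Finset.sum_involution (fun p _ => (p.2, p.1)) ?_ ?_ ?_ ?_
  · rintro ⟨i, j⟩ -
    simp only [hA.apply_swap i j]
    ring
  · rintro ⟨i, j⟩ - h h'
    simp only [Prod.mk.injEq] at h'
    rw [h'.1] at h
    simp [hA.2] at h
  · simp
  · simp

theorem rank_add_finrank_ker {n : ℕ} (A : Matrix (Fin n) (Fin n) K) :
    A.rank + finrank K (LinearMap.ker A.mulVecLin) = n := by
  have h := LinearMap.finrank_range_add_finrank_ker A.mulVecLin
  rwa [finrank_fin_fun] at h

/-- The embedding of `Kⁿ` into `Kⁿ⁺¹` as the vectors with vanishing first coordinate. -/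
def consZero (K : Type) [Field K] (n : ℕ) : (Fin n → K) →ₗ[K] (Fin (n + 1) → K) where
  toFun v := Fin.cons 0 v
  map_add' v w := by ext i; cases i using Fin.cases <;> simp
  map_smul' c v := by ext i; cases i using Fin.cases <;> simp

theorem consZero_apply {n : ℕ} (v : Fin n → K) : consZero K n v = Fin.cons 0 v := rfl

theorem consZero_injective (n : ℕ) : Function.Injective (consZero K n) :=
  Fin.cons_right_injective (α := fun _ => K) 0

theorem mem_ker_border_iff {n : ℕ} (A : Matrix (Fin n) (Fin n) K) (u : Fin n → K) (c : K)
    (v : Fin n → K) :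
    (Fin.cons c v : Fin (n + 1) → K) ∈ LinearMap.ker (border A u).mulVecLin ↔
      u ⬝ᵥ v = 0 ∧ c • u + A *ᵥ v = 0 := by
  rw [LinearMap.mem_ker, Matrix.mulVecLin_apply, border_mulVec_cons,
    show (0 : Fin (n + 1) → K) = Fin.cons 0 0 from by ext i; cases i using Fin.cases <;> rfl, Fin.cons_inj]
  simp

theorem rank_border_of_mem {n : ℕ} {A : Matrix (Fin n) (Fin n) K} (hA : IsSkewSym A)
    {u : Fin n → K} (hu : u ∈ LinearMap.range A.mulVecLin) : (border A u).rank = A.rank := by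
  obtain ⟨x, rfl⟩ := hu
  have hker : LinearMap.ker (border A (A.mulVecLin x)).mulVecLin =
      (LinearMap.ker A.mulVecLin).map (consZero K n) ⊔
        Submodule.span K {(Fin.cons 1 (-x) : Fin (n + 1) → K)} := by
    apply le_antisymm
    · intro w hw
      obtain ⟨c, v, rfl⟩ : ∃ c v, w = Fin.cons c v := ⟨w 0, Fin.tail w, (Fin.cons_self_tail w).symm⟩
      obtain ⟨-, h⟩ := (mem_ker_border_iff ..).1 hw
      refine Submodule.mem_sup.2 ⟨consZero K n (c • x + v), Submodule.mem_map_of_mem ?_,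
        c • Fin.cons 1 (-x), Submodule.smul_mem _ _ (Submodule.mem_span_singleton_self _), ?_⟩
      · rw [LinearMap.mem_ker, map_add, map_smul]
        exact h
      · ext i
        cases i using Fin.cases <;> simp [consZero_apply]
    · refine sup_le ?_ ?_
      · rintro _ ⟨v, hv, rfl⟩
        have hv' : A *ᵥ v = 0 := hv
        refine (mem_ker_border_iff ..).2 ⟨?_, by simp [hv']⟩
        rw [Matrix.mulVecLin_apply, dotProduct_comm, hA.dotProduct_mulVec, hv']
        simp
      · rw [Submodule.span_singleton_le_iff_mem, mem_ker_border_iff]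
        refine ⟨?_, by simp [Matrix.mulVec_neg]⟩
        rw [Matrix.mulVecLin_apply, dotProduct_neg, dotProduct_comm, hA.dotProduct_mulVec_self,
          neg_zero]
  have hnot : (Fin.cons 1 (-x) : Fin (n + 1) → K) ∉
      (LinearMap.ker A.mulVecLin).map (consZero K n) := by
    rintro ⟨v, -, hv⟩
    simpa [consZero_apply] using congrFun hv 0
  have h1 := rank_add_finrank_ker A
  have h2 := rank_add_finrank_ker (border A (A.mulVecLin x))
  rw [hker, Submodule.finrank_sup_span_singleton hnot,
    ← (Submodule.equivMapOfInjective _ (consZero_injective n) _).finrank_eq] at h2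
  lia

theorem IsSkewSym.exists_mulVec_eq_zero {n : ℕ} {A : Matrix (Fin n) (Fin n) K}
    (hA : IsSkewSym A) {u : Fin n → K} (hu : u ∉ LinearMap.range A.mulVecLin) :
    ∃ v, A *ᵥ v = 0 ∧ u ⬝ᵥ v ≠ 0 := by
  obtain ⟨f, hf, hfr⟩ := Submodule.exists_dual_map_eq_bot_of_notMem hu inferInstance
  obtain ⟨v, rfl⟩ := (dotProductEquiv K (Fin n)).surjective f
  refine ⟨v, ?_, by simpa [dotProduct_comm] using hf⟩
  refine (dotProductEquiv K (Fin n)).injective (LinearMap.ext fun w => ?_)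
  have h : v ⬝ᵥ A *ᵥ w = 0 :=
    (Submodule.mem_bot K).1 (hfr ▸ Submodule.mem_map_of_mem (LinearMap.mem_range_self _ w))
  simp only [dotProductEquiv_apply_apply, map_zero, LinearMap.zero_apply]
  rw [dotProduct_comm, hA.dotProduct_mulVec, h, neg_zero]

theorem rank_border_of_notMem {n : ℕ} {A : Matrix (Fin n) (Fin n) K} (hA : IsSkewSym A)
    {u : Fin n → K} (hu : u ∉ LinearMap.range A.mulVecLin) :
    (border A u).rank = A.rank + 2 := by
  obtain ⟨x, hx, hux⟩ := hA.exists_mulVec_eq_zero hu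
  let N := LinearMap.ker A.mulVecLin ⊓ LinearMap.ker (dotProductEquiv K (Fin n) u)
  have hker : LinearMap.ker (border A u).mulVecLin = N.map (consZero K n) := by
    apply le_antisymm
    · intro w hw
      obtain ⟨c, v, rfl⟩ : ∃ c v, w = Fin.cons c v := ⟨w 0, Fin.tail w, (Fin.cons_self_tail w).symm⟩
      obtain ⟨h0, h⟩ := (mem_ker_border_iff ..).1 hw
      have hc : c = 0 := by
        by_contra hc
        refine hu ⟨-c⁻¹ • v, ?_⟩
        rw [map_smul, Matrix.mulVecLin_apply, eq_neg_of_add_eq_zero_right h]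
        simp [hc]
      subst hc
      exact ⟨v, ⟨by simpa using h, h0⟩, rfl⟩
    · rintro _ ⟨v, ⟨hv, h0⟩, rfl⟩
      have hv' : A *ᵥ v = 0 := hv
      exact (mem_ker_border_iff ..).2 ⟨h0, by simp [hv']⟩
  have hA' : LinearMap.ker A.mulVecLin = N ⊔ Submodule.span K {x} := by
    apply le_antisymm
    · intro v hv
      refine Submodule.mem_sup.2 ⟨v - ((u ⬝ᵥ v) / (u ⬝ᵥ x)) • x, ⟨?_, ?_⟩, _,
        Submodule.smul_mem _ ((u ⬝ᵥ v) / (u ⬝ᵥ x)) (Submodule.mem_span_singleton_self _), by simp⟩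
      · exact Submodule.sub_mem _ hv (Submodule.smul_mem _ _ hx)
      · simp [hux]
    · exact sup_le inf_le_left ((Submodule.span_singleton_le_iff_mem _ _).2 hx)
  have h1 := rank_add_finrank_ker A
  have h2 := rank_add_finrank_ker (border A u)
  have hxN : x ∉ N := fun h => hux (Submodule.mem_inf.1 h).2
  rw [hA', Submodule.finrank_sup_span_singleton hxN] at h1
  rw [hker, ← (Submodule.equivMapOfInjective _ (consZero_injective n) _).finrank_eq] at h2
  lia

theorem IsSkewSym.even_rank {n : ℕ} {A : Matrix (Fin n) (Fin n) K} (hA : IsSkewSym A) :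
    Even A.rank := by
  induction n with
  | zero => simp [Subsingleton.elim A 0]
  | succ n ih =>
    rw [← hA.border_submatrix]
    have hA' := hA.submatrix Fin.succ
    by_cases hu : (fun i => A i.succ 0) ∈ LinearMap.range (A.submatrix Fin.succ Fin.succ).mulVecLin
    · rw [rank_border_of_mem hA' hu]
      exact ih hA'
    · rw [rank_border_of_notMem hA' hu]
      exact (ih hA').add even_two

end Bordering
section Counting

variable {K : Type} [Field K]

/-- The number of skew-symmetric `n × n` matrices with the property `P`. -/
noncomputable def skewCount (n : ℕ) (P : Matrix (Fin n) (Fin n) K → Prop) : ℕ :=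
  Nat.card {A : Matrix (Fin n) (Fin n) K // IsSkewSym A ∧ P A}

theorem skewCount_equiv {n : ℕ} (e : Matrix (Fin n) (Fin n) K ≃ Matrix (Fin n) (Fin n) K)
    {P Q : Matrix (Fin n) (Fin n) K → Prop}
    (he : ∀ A, IsSkewSym A ↔ IsSkewSym (e A)) (h : ∀ A, P A ↔ Q (e A)) :
    skewCount n P = skewCount n Q :=
  Nat.card_congr (e.subtypeEquiv fun A => and_congr (he A) (h A))

variable [Fintype K]

noncomputable instance (n : ℕ) : Fintype {A : Matrix (Fin n) (Fin n) K // IsSkewSym A} :=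
  Fintype.ofFinite _

/-- Skew-symmetric matrices of size `n + 1` are bordered skew-symmetric matrices of size `n`. -/
def borderEquiv (K : Type) [Field K] (n : ℕ) :
    {A : Matrix (Fin (n + 1)) (Fin (n + 1)) K // IsSkewSym A} ≃
      {A : Matrix (Fin n) (Fin n) K // IsSkewSym A} × (Fin n → K) where
  toFun A := (⟨A.1.submatrix Fin.succ Fin.succ, A.2.submatrix _⟩, fun i => A.1 i.succ 0)
  invFun p := ⟨border p.1.1 p.2, isSkewSym_border p.1.2 _⟩
  left_inv A := Subtype.ext A.2.border_submatrix
  right_inv _ := rfl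

theorem skewCount_succ (n : ℕ) (P : Matrix (Fin (n + 1)) (Fin (n + 1)) K → Prop) :
    skewCount (n + 1) P =
      ∑ A : {A : Matrix (Fin n) (Fin n) K // IsSkewSym A},
        Nat.card {u : Fin n → K // P (border A.1 u)} := by
  rw [← Nat.card_sigma, skewCount]
  refine Nat.card_congr ?_
  refine (Equiv.subtypeSubtypeEquivSubtypeInter IsSkewSym P).symm.trans ?_
  refine ((borderEquiv K n).subtypeEquiv (q := fun (p : {A : Matrix (Fin n) (Fin n) K // IsSkewSym A} × (Fin n → K)) =>
    P (border p.1.1 p.2)) fun A => ?_).trans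
    (Equiv.subtypeProdEquivSigmaSubtype
      fun (A : {A : Matrix (Fin n) (Fin n) K // IsSkewSym A}) u => P (border A.1 u))
  rw [show border ((borderEquiv K n) A).1.1 ((borderEquiv K n) A).2 = A.1 from
    A.2.border_submatrix]

theorem sum_skew_ite {n : ℕ} (P : Matrix (Fin n) (Fin n) K → Prop) [DecidablePred P] (c : ℕ) :
    ∑ A : {A : Matrix (Fin n) (Fin n) K // IsSkewSym A}, (if P A.1 then c else 0) =
      skewCount n P * c := by
  rw [← Finset.sum_filter, Finset.sum_const, smul_eq_mul, skewCount,
    ← Nat.card_congr (Equiv.subtypeSubtypeEquivSubtypeInter IsSkewSym P),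
    Nat.card_eq_fintype_card, Fintype.card_subtype]

theorem skewCount_and_add_not {n : ℕ} (P Q : Matrix (Fin n) (Fin n) K → Prop) :
    skewCount n (fun A => P A ∧ ¬Q A) + skewCount n (fun A => P A ∧ Q A) = skewCount n P := by
  classical
  rw [← mul_one (skewCount n P), ← mul_one (skewCount n fun A => P A ∧ ¬Q A),
    ← mul_one (skewCount n fun A => P A ∧ Q A),
    ← sum_skew_ite, ← sum_skew_ite, ← sum_skew_ite, ← Finset.sum_add_distrib]
  refine Finset.sum_congr rfl fun A _ => ?_
  by_cases P A.1 <;> by_cases Q A.1 <;> simp [*]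

theorem card_add_card_not {α : Type*} [Finite α] (P : α → Prop) :
    Nat.card {a // P a} + Nat.card {a // ¬P a} = Nat.card α := by
  classical
  rw [← Nat.card_sum, Nat.card_congr (Equiv.sumCompl P)]

theorem card_mem_submodule {n : ℕ} (V : Submodule K (Fin n → K)) :
    Nat.card {u // u ∈ V} = Fintype.card K ^ finrank K V := by
  rw [← Nat.card_eq_fintype_card]
  exact Module.natCard_eq_pow_finrank

omit [Field K] in
theorem card_fin_fun (n : ℕ) : Nat.card (Fin n → K) = Fintype.card K ^ n := by
  simp

theorem card_mul_card_affine_ne_zero {V : Type*} [AddCommGroup V] [Module K V] [Finite V]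
    {f : V →ₗ[K] K} (hf : f ≠ 0) (c : K) :
    Fintype.card K * Nat.card {v // c + f v ≠ 0} = (Fintype.card K - 1) * Nat.card V := by
  obtain ⟨w, hw⟩ := LinearMap.surjective hf 1
  have h0 : Fintype.card K * Nat.card {v // c + f v = 0} = Nat.card V := by
    rw [← Nat.card_eq_fintype_card, ← Nat.card_prod]
    refine Nat.card_congr
      { toFun := fun p => p.2.1 + p.1 • w
        invFun := fun v => (c + f v, ⟨v - (c + f v) • w, by simp [hw]⟩)
        left_inv := ?_
        right_inv := fun v => by simp }
    rintro ⟨a, v, hv⟩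
    have h : c + (f v + a) = a := by rw [← add_assoc, hv, zero_add]
    simp [hw, h]
  have h1 := card_add_card_not fun v => c + f v = 0
  rw [Nat.sub_mul, one_mul]
  nth_rw 1 [← h1]
  rw [mul_add, h0, Nat.add_sub_cancel_left]

theorem card_mul_card_mem_affine_ne_zero {n : ℕ} {V : Submodule K (Fin n → K)}
    {b : Fin n → K} (hb : ∃ v ∈ V, b ⬝ᵥ v ≠ 0) (c : K) :
    Fintype.card K * Nat.card {u // u ∈ V ∧ c + b ⬝ᵥ u ≠ 0} =
      (Fintype.card K - 1) * Fintype.card K ^ finrank K V := by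
  obtain ⟨v, hv, hbv⟩ := hb
  have hf : (dotProductEquiv K (Fin n) b).comp V.subtype ≠ 0 := fun h =>
    hbv (LinearMap.congr_fun h ⟨v, hv⟩)
  rw [← card_mem_submodule, ← card_mul_card_affine_ne_zero hf c]
  congr 1
  exact Nat.card_congr (Equiv.subtypeSubtypeEquivSubtypeInter (· ∈ V) fun u => c + b ⬝ᵥ u ≠ 0).symm

theorem card_rank_border_eq {n : ℕ} {A : Matrix (Fin n) (Fin n) K} (hA : IsSkewSym A) (r : ℕ) :
    Nat.card {u // (border A u).rank = r + 2} +
        (if A.rank = r then Fintype.card K ^ r else 0) =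
      (if A.rank = r + 2 then Fintype.card K ^ (r + 2) else 0) +
        (if A.rank = r then Fintype.card K ^ n else 0) := by
  have hmem := fun u (hu : u ∈ LinearMap.range A.mulVecLin) => rank_border_of_mem hA hu
  have hnot := fun u (hu : u ∉ LinearMap.range A.mulVecLin) => rank_border_of_notMem hA hu
  have hc : Nat.card {u // u ∈ LinearMap.range A.mulVecLin} = Fintype.card K ^ A.rank :=
    card_mem_submodule _
  by_cases h2 : A.rank = r + 2
  · have h : ∀ u, (border A u).rank = r + 2 ↔ u ∈ LinearMap.range A.mulVecLin := fun u =>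
      ⟨fun h => by by_contra hu; have := hnot u hu; lia, fun hu => by rw [hmem u hu, h2]⟩
    simp only [h, hc]
    simp [h2]
  by_cases h0 : A.rank = r
  · have h : ∀ u, (border A u).rank = r + 2 ↔ u ∉ LinearMap.range A.mulVecLin := fun u =>
      ⟨fun h hu => by have := hmem u hu; lia, fun hu => by rw [hnot u hu, h0]⟩
    have h1 := card_add_card_not (· ∈ LinearMap.range A.mulVecLin)
    rw [hc, card_fin_fun] at h1
    simp only [h]
    simp [h0] at h1 ⊢
    lia
  · have : IsEmpty {u // (border A u).rank = r + 2} := ⟨fun ⟨u, hu⟩ => by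
      by_cases hr : u ∈ LinearMap.range A.mulVecLin
      · have := hmem u hr; lia
      · have := hnot u hr; lia⟩
    simp [h0, h2]

theorem na_succ_succ (r n : ℕ) :
    na K (r + 2) (n + 1) + Fintype.card K ^ r * na K r n =
      Fintype.card K ^ (r + 2) * na K (r + 2) n + Fintype.card K ^ n * na K r n := by
  have h : ∀ r n, na K r n = skewCount n fun A : Matrix (Fin n) (Fin n) K => A.rank = r :=
    fun _ _ => rfl
  rw [h, skewCount_succ]
  simp only [h, mul_comm (Fintype.card K ^ _), ← sum_skew_ite, ← Finset.sum_add_distrib]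
  exact Finset.sum_congr rfl fun A _ => card_rank_border_eq A.2 r

omit [Fintype K] in
theorem na_eq_zero {r n : ℕ} (h : n < r) : na K r n = 0 := by
  have : IsEmpty {A : Matrix (Fin n) (Fin n) K // IsSkewSym A ∧ A.rank = r} := ⟨fun A => by
    have := A.1.rank_le_width
    have := A.2.2
    lia⟩
  exact Nat.card_of_isEmpty

omit [Fintype K] in
theorem eq_zero_of_rank_eq_zero {n : ℕ} {A : Matrix (Fin n) (Fin n) K} (h : A.rank = 0) :
    A = 0 := by
  rw [Matrix.rank, Submodule.finrank_eq_zero, LinearMap.range_eq_bot] at h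
  exact Matrix.toLin'.injective (by rw [map_zero]; exact h)

omit [Fintype K] in
theorem na_zero_left (n : ℕ) : na K 0 n = 1 := by
  have h : Unique {A : Matrix (Fin n) (Fin n) K // IsSkewSym A ∧ A.rank = 0} :=
    { default := ⟨0, ⟨by simp, by simp⟩, by simp⟩
      uniq := fun A => Subtype.ext (eq_zero_of_rank_eq_zero A.2.2) }
  exact Nat.card_unique

theorem card_mul_pow_na_eq (s n : ℕ) :
    ((Fintype.card K : ℤ) ^ (n + 1) - 1) * Fintype.card K ^ (2 * s) * na K (2 * s) n =
      ((Fintype.card K : ℤ) ^ (n + 1) - Fintype.card K ^ (2 * s)) * na K (2 * s) (n + 1) := by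
  induction n generalizing s with
  | zero =>
    rcases s with _ | s
    · simp [na_zero_left]
    · rw [na_eq_zero (by lia), na_eq_zero (by lia)]
      simp
  | succ n ih =>
    rcases s with _ | s
    · simp [na_zero_left]
    · have h1 := na_succ_succ (K := K) (2 * s) n
      have h2 := na_succ_succ (K := K) (2 * s) (n + 1)
      have ih0 := ih s
      have ih1 := ih (s + 1)
      rw [mul_add_one 2 s] at ih1 ⊢
      zify at h1 h2
      generalize (na K (2 * s + 2) (n + 1 + 1) : ℤ) = x2 at *
      generalize (na K (2 * s + 2) (n + 1) : ℤ) = x1 at *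
      generalize (na K (2 * s + 2) n : ℤ) = x0 at *
      generalize (na K (2 * s) (n + 1) : ℤ) = y1 at *
      generalize (na K (2 * s) n : ℤ) = y0 at *
      simp only [pow_add, pow_one] at *
      generalize (Fintype.card K : ℤ) = q at *
      generalize q ^ (2 * s) = b at *
      generalize q ^ n = a at *
      linear_combination -(a * q ^ 2 - b * q ^ 2) * h2 + (a * q ^ 2 - b * q ^ 2) * ih0 +
        b * q ^ 2 * (ih1 + (a * q - 1) * h1)

end Counting
section Kernel

variable {K : Type} [Field K]

theorem isSkewSym_congr {n : ℕ} {A : Matrix (Fin n) (Fin n) K} (hA : IsSkewSym A)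
    (P : Matrix (Fin n) (Fin n) K) : IsSkewSym (Pᵀ * A * P) := by
  constructor
  · rw [Matrix.transpose_mul, Matrix.transpose_mul, hA.1, Matrix.transpose_transpose]
    simp [Matrix.mul_assoc]
  · intro i
    have h := hA.dotProduct_mulVec_self fun k => P k i
    rw [Matrix.dotProduct_mulVec] at h
    exact h

/-- The bijection `A ↦ Pᵀ * A * P` for invertible `P`. -/
def congrEquiv {n : ℕ} (P : (Matrix (Fin n) (Fin n) K)ˣ) :
    Matrix (Fin n) (Fin n) K ≃ Matrix (Fin n) (Fin n) K where
  toFun A := (P.1)ᵀ * A * P.1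
  invFun A := (P.2)ᵀ * A * P.2
  left_inv A := by
    have h : (P.2)ᵀ * (P.1)ᵀ = 1 := by rw [← Matrix.transpose_mul, P.3, Matrix.transpose_one]
    calc (P.2)ᵀ * ((P.1)ᵀ * A * P.1) * P.2 = ((P.2)ᵀ * (P.1)ᵀ) * A * (P.1 * P.2) := by
          simp only [Matrix.mul_assoc]
      _ = A := by rw [h, P.3]; simp
  right_inv A := by
    have h : (P.1)ᵀ * (P.2)ᵀ = 1 := by rw [← Matrix.transpose_mul, P.4, Matrix.transpose_one]
    calc (P.1)ᵀ * ((P.2)ᵀ * A * P.2) * P.1 = ((P.1)ᵀ * (P.2)ᵀ) * A * (P.2 * P.1) := by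
          simp only [Matrix.mul_assoc]
      _ = A := by rw [h, P.4]; simp

theorem isSkewSym_congrEquiv_iff {n : ℕ} (P : (Matrix (Fin n) (Fin n) K)ˣ)
    (A : Matrix (Fin n) (Fin n) K) : IsSkewSym A ↔ IsSkewSym (congrEquiv P A) := by
  refine ⟨fun h => isSkewSym_congr h _, fun h => ?_⟩
  rw [← (congrEquiv P).symm_apply_apply A]
  exact isSkewSym_congr h _

theorem rank_congrEquiv {n : ℕ} (P : (Matrix (Fin n) (Fin n) K)ˣ)
    (A : Matrix (Fin n) (Fin n) K) : (congrEquiv P A).rank = A.rank := by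
  have hP : IsUnit P.1.det := (Matrix.isUnit_iff_isUnit_det _).1 P.isUnit
  have hPt : IsUnit (P.1)ᵀ.det := by rwa [Matrix.det_transpose]
  exact (Matrix.rank_mul_eq_left_of_isUnit_det P.1 _ hP).trans
    (Matrix.rank_mul_eq_right_of_isUnit_det _ A hPt)

theorem exists_unit_mulVec_eq {n : ℕ} {x y : Fin n → K} (hx : x ≠ 0) (hy : y ≠ 0) :
    ∃ P : (Matrix (Fin n) (Fin n) K)ˣ, P.1 *ᵥ x = y := by
  obtain ⟨g, hg⟩ := Submodule.exists_linearEquiv_restrict_eq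
    ((LinearEquiv.toSpanNonzeroSingleton K _ x hx).symm.trans
      (LinearEquiv.toSpanNonzeroSingleton K _ y hy))
  have hgx : y = g x := by
    have h := hg ⟨x, Submodule.mem_span_singleton_self x⟩
    rwa [LinearEquiv.trans_apply, ← LinearEquiv.toSpanNonzeroSingleton_one K _ x hx,
      LinearEquiv.symm_apply_apply, LinearEquiv.toSpanNonzeroSingleton_one,
      LinearEquiv.toSpanNonzeroSingleton_one] at h
  refine ⟨⟨LinearMap.toMatrix' g.toLinearMap, LinearMap.toMatrix' g.symm.toLinearMap, ?_, ?_⟩, ?_⟩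
  · rw [← LinearMap.toMatrix'_comp]; simp
  · rw [← LinearMap.toMatrix'_comp]; simp
  · rw [LinearMap.toMatrix'_mulVec, hgx]; rfl

theorem skewCount_rank_eq_and_mulVec_eq_zero [Fintype K] {n : ℕ} (r : ℕ) {b : Fin (n + 1) → K}
    (hb : b ≠ 0) : skewCount (n + 1) (fun A => A.rank = r ∧ A *ᵥ b = 0) = na K r n := by
  classical
  let e : Fin (n + 1) → K := Fin.cons 1 0
  have he : e ≠ 0 := fun h => one_ne_zero (congrFun h 0)
  obtain ⟨P, hP⟩ := exists_unit_mulVec_eq he hb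
  have hPt : Function.Injective fun v => (P.1)ᵀ *ᵥ v :=
    Matrix.mulVec_injective_of_isUnit ((Matrix.isUnit_transpose _).2 P.isUnit)
  have h1 : skewCount (n + 1) (fun A => A.rank = r ∧ A *ᵥ b = 0) =
      skewCount (n + 1) fun A => A.rank = r ∧ A *ᵥ e = 0 := by
    refine skewCount_equiv (congrEquiv P) (isSkewSym_congrEquiv_iff P) fun A => ?_
    rw [rank_congrEquiv]
    refine and_congr_right fun _ => ?_
    change _ ↔ ((P.1)ᵀ * A * P.1) *ᵥ e = 0
    rw [← Matrix.mulVec_mulVec, hP, ← Matrix.mulVec_mulVec, ← hPt.eq_iff (b := (0 : Fin (n + 1) → K)),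
      Matrix.mulVec_zero]
  have h2 : na K r n = skewCount n fun A : Matrix (Fin n) (Fin n) K => A.rank = r := rfl
  rw [h1, skewCount_succ, h2, ← mul_one (skewCount n _), ← sum_skew_ite]
  refine Finset.sum_congr rfl fun A _ => ?_
  have h3 : ∀ u, border A.1 u *ᵥ e = 0 ↔ u = 0 := fun u => by
    rw [border_mulVec_cons,
      show (0 : Fin (n + 1) → K) = Fin.cons 0 0 by ext i; cases i using Fin.cases <;> rfl,
      Fin.cons_inj]
    simp
  have h4 : ∀ u, ((border A.1 u).rank = r ∧ border A.1 u *ᵥ e = 0) ↔ (A.1.rank = r ∧ u = 0) :=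
    fun u => by
      rw [h3]
      refine and_congr_left ?_
      rintro rfl
      rw [rank_border_of_mem A.2 (Submodule.zero_mem _)]
  simp only [h4]
  split_ifs with h
  · simp [h]
  · simp [h]

end Kernel

section Weight

variable {K : Type} [Field K] [Fintype K]

/-- The vector of coefficients of the functional `φ` along the first column. -/
def borderCoeff {n : ℕ} (φ : Matrix (Fin (n + 1)) (Fin (n + 1)) K →ₗ[K] K) (i : Fin n) : K :=
  φ (border 0 (Pi.single i 1))

omit [Fintype K] in
theorem apply_border {n : ℕ} (φ : Matrix (Fin (n + 1)) (Fin (n + 1)) K →ₗ[K] K)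
    (A : Matrix (Fin n) (Fin n) K) (u : Fin n → K) :
    φ (border A u) = φ (border A 0) + borderCoeff φ ⬝ᵥ u := by
  have h : border A u = border A 0 + ∑ i, u i • border 0 (Pi.single i 1) := by
    ext i j
    cases i using Fin.cases <;> cases j using Fin.cases <;>
      simp [Matrix.sum_apply, Pi.single_apply]
  rw [h, map_add, map_sum]
  simp [dotProduct, borderCoeff, mul_comm]

/-- The number of affine representatives on which `φ` does not vanish. -/
noncomputable def affineWeight (n t : ℕ) (φ : Matrix (Fin n) (Fin n) K →ₗ[K] K) : ℕ :=
  skewCount n fun A => A.rank ≤ 2 * t ∧ φ A ≠ 0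

theorem card_border_apply_ne_zero {n s : ℕ}
    {φ : Matrix (Fin (n + 1)) (Fin (n + 1)) K →ₗ[K] K} (hφ : borderCoeff φ ≠ 0)
    {A : Matrix (Fin n) (Fin n) K} (hA : IsSkewSym A) (hr : A.rank ≤ 2 * s) :
    Fintype.card K * Nat.card {u // (border A u).rank ≤ 2 * (s + 1) ∧ φ (border A u) ≠ 0} =
      (Fintype.card K - 1) * Fintype.card K ^ n := by
  have h : ∀ u, ((border A u).rank ≤ 2 * (s + 1) ∧ φ (border A u) ≠ 0) ↔
      φ (border A 0) + dotProductEquiv K (Fin n) (borderCoeff φ) u ≠ 0 := fun u => by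
    rw [apply_border φ A u]
    refine and_iff_right ?_
    by_cases hu : u ∈ LinearMap.range A.mulVecLin
    · rw [rank_border_of_mem hA hu]; lia
    · rw [rank_border_of_notMem hA hu]; lia
  simp only [h]
  rw [card_mul_card_affine_ne_zero (by simpa using hφ), card_fin_fun]

omit [Fintype K] in
theorem rank_border_le_iff {n s : ℕ} {A : Matrix (Fin n) (Fin n) K} (hA : IsSkewSym A)
    (hr : A.rank = 2 * s + 2) (u : Fin n → K) :
    (border A u).rank ≤ 2 * (s + 1) ↔ u ∈ LinearMap.range A.mulVecLin := by
  by_cases hu : u ∈ LinearMap.range A.mulVecLin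
  · simp only [hu, iff_true, rank_border_of_mem hA hu]; lia
  · simp only [hu, iff_false, rank_border_of_notMem hA hu]; lia

theorem card_border_apply_ne_zero_of_mulVec_ne_zero {n s : ℕ}
    (φ : Matrix (Fin (n + 1)) (Fin (n + 1)) K →ₗ[K] K)
    {A : Matrix (Fin n) (Fin n) K} (hA : IsSkewSym A) (hr : A.rank = 2 * s + 2)
    (hb : A *ᵥ borderCoeff φ ≠ 0) :
    Fintype.card K * Nat.card {u // (border A u).rank ≤ 2 * (s + 1) ∧ φ (border A u) ≠ 0} =
      (Fintype.card K - 1) * Fintype.card K ^ (2 * s + 2) := by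
  have hv : ∃ v ∈ LinearMap.range A.mulVecLin, borderCoeff φ ⬝ᵥ v ≠ 0 := by
    obtain ⟨i, hi⟩ := Function.ne_iff.1 hb
    refine ⟨_, LinearMap.mem_range_self _ (Pi.single i 1), ?_⟩
    rw [Matrix.mulVecLin_apply, hA.dotProduct_mulVec]
    simpa using hi
  have h : ∀ u, ((border A u).rank ≤ 2 * (s + 1) ∧ φ (border A u) ≠ 0) ↔
      (u ∈ LinearMap.range A.mulVecLin ∧ φ (border A 0) + borderCoeff φ ⬝ᵥ u ≠ 0) := fun u => by
    rw [rank_border_le_iff hA hr, apply_border φ A u]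
  simp only [h]
  rw [card_mul_card_mem_affine_ne_zero hv, ← hr]
  rfl

omit [Fintype K] in
theorem card_border_apply_ne_zero_of_mulVec_eq_zero {n s : ℕ}
    {φ : Matrix (Fin (n + 1)) (Fin (n + 1)) K →ₗ[K] K}
    {A : Matrix (Fin n) (Fin n) K} (hφ : φ (border A 0) = 0) (hA : IsSkewSym A)
    (hr : A.rank = 2 * s + 2) (hb : A *ᵥ borderCoeff φ = 0) :
    Nat.card {u // (border A u).rank ≤ 2 * (s + 1) ∧ φ (border A u) ≠ 0} = 0 := by
  have : IsEmpty {u // (border A u).rank ≤ 2 * (s + 1) ∧ φ (border A u) ≠ 0} := by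
    refine ⟨fun ⟨u, hu, h⟩ => h ?_⟩
    obtain ⟨x, rfl⟩ := (rank_border_le_iff hA hr u).1 hu
    rw [apply_border φ A, hφ, Matrix.mulVecLin_apply, hA.dotProduct_mulVec, hb]
    simp
  exact Nat.card_of_isEmpty

omit [Fintype K] in
theorem card_border_apply_ne_zero_of_lt {n s : ℕ}
    (φ : Matrix (Fin (n + 1)) (Fin (n + 1)) K →ₗ[K] K)
    {A : Matrix (Fin n) (Fin n) K} (hA : IsSkewSym A) (hr : 2 * s + 2 < A.rank) :
    Nat.card {u // (border A u).rank ≤ 2 * (s + 1) ∧ φ (border A u) ≠ 0} = 0 := by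
  have : IsEmpty {u // (border A u).rank ≤ 2 * (s + 1) ∧ φ (border A u) ≠ 0} := by
    refine ⟨fun ⟨u, hu, _⟩ => ?_⟩
    by_cases h : u ∈ LinearMap.range A.mulVecLin
    · rw [rank_border_of_mem hA h] at hu; lia
    · rw [rank_border_of_notMem hA h] at hu; lia
  exact Nat.card_of_isEmpty

omit [Fintype K] in
theorem IsSkewSym.rank_trichotomy {n : ℕ} {A : Matrix (Fin n) (Fin n) K} (hA : IsSkewSym A)
    (s : ℕ) : A.rank ≤ 2 * s ∨ A.rank = 2 * s + 2 ∨ 2 * s + 2 < A.rank := by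
  obtain ⟨k, hk⟩ := hA.even_rank
  lia

theorem le_card_mul_affineWeight {n s : ℕ}
    {φ : Matrix (Fin (n + 1)) (Fin (n + 1)) K →ₗ[K] K} (hφ : borderCoeff φ ≠ 0) :
    Na K (2 * s) n * ((Fintype.card K - 1) * Fintype.card K ^ n) +
        skewCount n (fun A => A.rank = 2 * s + 2 ∧ ¬A *ᵥ borderCoeff φ = 0) *
          ((Fintype.card K - 1) * Fintype.card K ^ (2 * s + 2)) ≤
      Fintype.card K * affineWeight (n + 1) (s + 1) φ := by
  classical
  have h : Na K (2 * s) n = skewCount n fun A : Matrix (Fin n) (Fin n) K => A.rank ≤ 2 * s := rfl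
  rw [h, affineWeight, skewCount_succ, ← sum_skew_ite, ← sum_skew_ite, ← Finset.sum_add_distrib,
    Finset.mul_sum]
  refine Finset.sum_le_sum fun A _ => ?_
  rcases A.2.rank_trichotomy s with hr | hr | hr
  · rw [card_border_apply_ne_zero hφ A.2 hr, if_pos hr, if_neg (by lia), add_zero]
  · by_cases hb : A.1 *ᵥ borderCoeff φ = 0
    · simp [hr, hb]
    · rw [card_border_apply_ne_zero_of_mulVec_ne_zero φ A.2 hr hb, if_neg (by lia),
        if_pos ⟨hr, hb⟩, zero_add]
  · rw [if_neg (by lia), if_neg (by lia)]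
    exact Nat.zero_le _

theorem card_mul_affineWeight_eq {n s : ℕ}
    {φ : Matrix (Fin (n + 1)) (Fin (n + 1)) K →ₗ[K] K} (hφ : borderCoeff φ ≠ 0)
    (hφ0 : ∀ A : Matrix (Fin n) (Fin n) K, φ (border A 0) = 0) :
    Na K (2 * s) n * ((Fintype.card K - 1) * Fintype.card K ^ n) +
        skewCount n (fun A => A.rank = 2 * s + 2 ∧ ¬A *ᵥ borderCoeff φ = 0) *
          ((Fintype.card K - 1) * Fintype.card K ^ (2 * s + 2)) =
      Fintype.card K * affineWeight (n + 1) (s + 1) φ := by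
  classical
  have h : Na K (2 * s) n = skewCount n fun A : Matrix (Fin n) (Fin n) K => A.rank ≤ 2 * s := rfl
  rw [h, affineWeight, skewCount_succ, ← sum_skew_ite, ← sum_skew_ite, ← Finset.sum_add_distrib,
    Finset.mul_sum]
  refine Finset.sum_congr rfl fun A _ => ?_
  rcases A.2.rank_trichotomy s with hr | hr | hr
  · rw [card_border_apply_ne_zero hφ A.2 hr, if_pos hr, if_neg (by lia), add_zero]
  · by_cases hb : A.1 *ᵥ borderCoeff φ = 0
    · rw [card_border_apply_ne_zero_of_mulVec_eq_zero (hφ0 A.1) A.2 hr hb]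
      simp [hr, hb]
    · rw [card_border_apply_ne_zero_of_mulVec_ne_zero φ A.2 hr hb, if_neg (by lia),
        if_pos ⟨hr, hb⟩, zero_add]
  · rw [if_neg (by lia), if_neg (by lia), card_border_apply_ne_zero_of_lt φ A.2 hr, mul_zero, add_zero]

end Weight
section ProjectiveWeight

variable {K : Type} [Field K]

theorem IsSkewSym.smul {n : ℕ} {A : Matrix (Fin n) (Fin n) K} (hA : IsSkewSym A) (c : K) :
    IsSkewSym (c • A) :=
  ⟨by rw [Matrix.transpose_smul, hA.1, smul_neg], fun i => by simp [hA.2]⟩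

theorem rank_units_smul {n : ℕ} (A : Matrix (Fin n) (Fin n) K) (c : Kˣ) :
    (c • A).rank = A.rank := by
  have h : IsUnit (Matrix.scalar (Fin n) (c : K)).det :=
    (Matrix.isUnit_iff_isUnit_det _).1 (c.isUnit.map (Matrix.scalar (Fin n)))
  rw [← Matrix.rank_mul_eq_right_of_isUnit_det _ A h]
  congr 1
  ext i j
  simp [Units.smul_def]

theorem card_units_mul_projWt [Fintype K] (n t : ℕ) (φ : Matrix (Fin n) (Fin n) K →ₗ[K] K) :
    (Fintype.card K - 1) * projWt K n t φ = affineWeight n t φ := by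
  have hsmul : ∀ (c : Kˣ) (A : Matrix (Fin n) (Fin n) K),
      IsSkewSym A ∧ A.rank ≤ 2 * t ∧ φ A ≠ 0 →
        IsSkewSym (c • A) ∧ (c • A).rank ≤ 2 * t ∧ φ (c • A) ≠ 0 := fun c A hA =>
    ⟨hA.1.smul (c : K), by rw [rank_units_smul]; exact hA.2.1, by
      rw [Units.smul_def, map_smul, smul_eq_mul]
      exact mul_ne_zero c.ne_zero hA.2.2⟩
  rw [projWt, affineWeight, skewCount, ← Nat.card_eq_fintype_card, ← Nat.card_units,
    ← Nat.card_prod]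
  refine Nat.card_eq_of_bijective (fun p => ⟨p.1 • p.2.1.rep, hsmul _ _ ?_⟩) ⟨?_, ?_⟩
  · obtain ⟨A, h, hx, hA⟩ := p.2.2
    obtain ⟨a, ha⟩ := Projectivization.exists_smul_eq_mk_rep K A h
    rw [hx, ← ha]
    exact hsmul a A hA
  · rintro ⟨c, x, hx⟩ ⟨d, y, hy⟩ hxy
    have h : c • x.rep = d • y.rep := congrArg Subtype.val hxy
    have hxy' : x = y := by
      rw [← x.mk_rep, ← y.mk_rep, Projectivization.mk_eq_mk_iff]
      exact ⟨c⁻¹ * d, by rw [mul_smul, ← h, inv_smul_smul]⟩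
    subst hxy'
    have hcd : (c : K) = d := smul_left_injective K x.rep_nonzero h
    rw [Units.ext hcd]
  · rintro ⟨A, hA⟩
    have h : A ≠ 0 := by
      rintro rfl
      simp at hA
    obtain ⟨a, ha⟩ := Projectivization.exists_smul_eq_mk_rep K A h
    refine ⟨(a⁻¹, ⟨Projectivization.mk K A h, A, h, rfl, hA⟩), Subtype.ext ?_⟩
    change a⁻¹ • (Projectivization.mk K A h).rep = A
    rw [← ha, inv_smul_smul]

end ProjectiveWeight

section MinimumDistance

variable {K : Type} [Field K]

theorem IsSkewSym.exists_apply_ne_zero (hchar : ringChar K ≠ 2) {n : ℕ}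
    {A : Matrix (Fin n) (Fin n) K} (hA : IsSkewSym A)
    {φ : Matrix (Fin n) (Fin n) K →ₗ[K] K} (hφ : φ A ≠ 0) :
    ∃ i j, i ≠ j ∧ φ (Matrix.single i j 1 - Matrix.single j i 1) ≠ 0 := by
  by_contra! h
  have h2 : (2 : K) ≠ 0 := Ring.two_ne_zero hchar
  have hsum : (2 : K) • A =
      ∑ i, ∑ j, A i j • (Matrix.single i j 1 - Matrix.single j i 1) := by
    simp only [smul_sub, Finset.sum_sub_distrib, Matrix.smul_single, smul_eq_mul, mul_one]
    rw [← Matrix.matrix_eq_sum_single, Finset.sum_comm]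
    have : A = -Aᵀ := by rw [hA.1, neg_neg]
    rw [show ∑ j, ∑ i, Matrix.single j i (A i j) = Aᵀ from
      (Matrix.matrix_eq_sum_single Aᵀ).symm, hA.1, two_smul, sub_neg_eq_add]
  have h0 : φ ((2 : K) • A) = 0 := by
    simp only [hsum, map_sum, map_smul]
    refine Finset.sum_eq_zero fun i _ => Finset.sum_eq_zero fun j _ => ?_
    by_cases hij : i = j
    · simp [hij]
    · rw [h i j hij, smul_zero]
  rw [map_smul, smul_eq_mul] at h0
  exact hφ ((mul_eq_zero.1 h0).resolve_left h2)

theorem border_zero_single {n : ℕ} (i : Fin n) :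
    border 0 (Pi.single i (1 : K)) = Matrix.single i.succ 0 1 - Matrix.single 0 i.succ 1 := by
  ext k l
  cases k using Fin.cases <;> cases l using Fin.cases <;>
    simp [Matrix.single_apply, Pi.single_apply, eq_comm]

/-- Any functional that does not vanish on skew-symmetric matrices becomes, after a simultaneous
permutation of rows and columns, one that involves the first column. -/
theorem exists_borderCoeff_ne_zero (hchar : ringChar K ≠ 2) {n : ℕ} (t : ℕ)
    {A : Matrix (Fin (n + 1)) (Fin (n + 1)) K} (hA : IsSkewSym A)
    {φ : Matrix (Fin (n + 1)) (Fin (n + 1)) K →ₗ[K] K} (hφ : φ A ≠ 0) :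
    ∃ ψ : Matrix (Fin (n + 1)) (Fin (n + 1)) K →ₗ[K] K,
      borderCoeff ψ ≠ 0 ∧ affineWeight (n + 1) t ψ = affineWeight (n + 1) t φ := by
  obtain ⟨i, j, hij, h⟩ := hA.exists_apply_ne_zero hchar hφ
  let σ := Equiv.swap 0 j
  let e := Matrix.reindexLinearEquiv K K σ σ
  have hσ : ∃ k : Fin n, k.succ = σ i := Fin.exists_succ_eq.2 fun h0 => hij <| by
    rw [← σ.symm_apply_apply i, h0]; simp [σ]
  obtain ⟨k, hk⟩ := hσ
  refine ⟨φ.comp e.toLinearMap, fun h0 => h ?_, skewCount_equiv e.toEquiv (fun B => ?_) fun B => ?_⟩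
  · have h1 : φ (e (border 0 (Pi.single k 1))) = 0 := congrFun h0 k
    have hi : σ (σ i) = i := by simp [σ]
    have hswap : ∀ x, 0 = Equiv.swap 0 j x ↔ j = x := fun x => by
      rw [eq_comm, Equiv.swap_apply_eq_iff, Equiv.swap_apply_left, eq_comm]
    rw [border_zero_single, hk] at h1
    rw [← h1]
    congr 1
    ext a b
    simp [e, Matrix.single_apply, σ, hswap]
  · refine ⟨fun hB => hB.submatrix _, fun hB => ?_⟩
    have h2 := hB.submatrix σ
    have h3 : (e.toEquiv B).submatrix σ σ = B := by ext; simp [e]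
    rwa [h3] at h2
  · have h3 : (e B).rank = B.rank := Matrix.rank_submatrix B σ.symm σ.symm
    change _ ↔ (e B).rank ≤ 2 * t ∧ φ (e B) ≠ 0
    rw [h3]
    rfl

variable [Fintype K]

theorem card_pow_mul_skewCount_mulVec_ne_zero (s p : ℕ) {b : Fin (p + 1) → K} (hb : b ≠ 0) :
    Fintype.card K ^ (2 * s + 2) *
        skewCount (p + 1) (fun A => A.rank = 2 * s + 2 ∧ ¬A *ᵥ b = 0) +
      Fintype.card K ^ (p + 1 + 2 * s) * na K (2 * s) p =
    Fintype.card K ^ (2 * p + 1) * na K (2 * s) p := by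
  have h1 := skewCount_and_add_not (fun A : Matrix (Fin (p + 1)) (Fin (p + 1)) K =>
    A.rank = 2 * s + 2) fun A => A *ᵥ b = 0
  rw [skewCount_rank_eq_and_mulVec_eq_zero _ hb,
    show skewCount (p + 1) (fun A : Matrix (Fin (p + 1)) (Fin (p + 1)) K => A.rank = 2 * s + 2) =
      na K (2 * s + 2) (p + 1) from rfl] at h1
  have h2 := na_succ_succ (K := K) (2 * s) p
  have h3 := card_mul_pow_na_eq (K := K) (s + 1) p
  rw [mul_add_one 2 s] at h3
  generalize skewCount (p + 1) (fun A : Matrix (Fin (p + 1)) (Fin (p + 1)) K =>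
    A.rank = 2 * s + 2 ∧ ¬A *ᵥ b = 0) = z at *
  zify at h1 h2 ⊢
  generalize (z : ℤ) = z at *
  generalize (na K (2 * s + 2) (p + 1) : ℤ) = x1 at *
  generalize (na K (2 * s + 2) p : ℤ) = x0 at *
  generalize (na K (2 * s) p : ℤ) = y0 at *
  simp only [mul_comm 2 p, mul_two, pow_add, pow_one] at *
  generalize (Fintype.card K : ℤ) = q at *
  generalize q ^ (2 * s) = c at *
  generalize q ^ p = a at *
  linear_combination c * q ^ 2 * h1 + a * q * h2 + h3

/-- The minimum distance, for matrices of size `p + 2` and rank at most `2 * (s + 1)`. -/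
noncomputable def minDist (K : Type) [Field K] [Fintype K] (s p : ℕ) : ℕ :=
  (Fintype.card K ^ (p - 2 * s) - 1) * Fintype.card K ^ (p + 2 * s) * na K (2 * s) p +
    Fintype.card K ^ p * Na K (2 * s) (p + 1)

theorem card_mul_minDist {s p : ℕ} (hsp : 2 * s ≤ p) {b : Fin (p + 1) → K} (hb : b ≠ 0) :
    Na K (2 * s) (p + 1) * ((Fintype.card K - 1) * Fintype.card K ^ (p + 1)) +
        skewCount (p + 1) (fun A => A.rank = 2 * s + 2 ∧ ¬A *ᵥ b = 0) *
          ((Fintype.card K - 1) * Fintype.card K ^ (2 * s + 2)) =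
      Fintype.card K * ((Fintype.card K - 1) * minDist K s p) := by
  have h := card_pow_mul_skewCount_mulVec_ne_zero s p hb
  obtain ⟨d, rfl⟩ := Nat.exists_eq_add_of_le hsp
  have hpos : 1 ≤ Fintype.card K ^ d := Nat.one_le_pow _ _ Fintype.card_pos
  have hq : 1 ≤ Fintype.card K := Fintype.card_pos
  rw [minDist, Nat.add_sub_cancel_left]
  zify [hpos, hq] at h ⊢
  simp only [mul_add, two_mul, pow_add, pow_one] at h ⊢
  linear_combination ((Fintype.card K : ℤ) - 1) * h

theorem minDist_le_projWt {s p : ℕ} (hsp : 2 * s ≤ p)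
    {φ : Matrix (Fin (p + 2)) (Fin (p + 2)) K →ₗ[K] K} (hφ : borderCoeff φ ≠ 0) :
    (Fintype.card K - 1) * minDist K s p ≤ affineWeight (p + 2) (s + 1) φ :=
  Nat.le_of_mul_le_mul_left ((card_mul_minDist hsp hφ).symm.trans_le (le_card_mul_affineWeight hφ))
    Fintype.card_pos

end MinimumDistance

theorem stmt17 (K : Type) [Field K] [Fintype K] (hchar : ringChar K ≠ 2)
    (m t : ℕ) (ht : 0 < t) (htm : 2*t ≤ m) :
    IsLeast {w : ℕ | ∃ φ : Matrix (Fin m) (Fin m) K →ₗ[K] K,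
        (∃ A : Matrix (Fin m) (Fin m) K, IsSkewSym A ∧ A.rank ≤ 2*t ∧ φ A ≠ 0) ∧
        w = projWt K m t φ}
      ((Fintype.card K ^ (m - 2*t) - 1) * Fintype.card K ^ (m + 2*t - 4)
          * na K (2*t-2) (m-2)
        + Fintype.card K ^ (m-2) * Na K (2*t-2) (m-1)) := by
  obtain ⟨s, rfl⟩ : ∃ s, t = s + 1 := ⟨t - 1, by lia⟩
  obtain ⟨p, rfl⟩ : ∃ p, m = p + 2 := ⟨m - 2, by lia⟩
  have hq : 0 < Fintype.card K - 1 := by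
    have := Fintype.one_lt_card (α := K)
    lia
  have hd : (Fintype.card K ^ (p + 2 - 2 * (s + 1)) - 1) *
        Fintype.card K ^ (p + 2 + 2 * (s + 1) - 4) * na K (2 * (s + 1) - 2) (p + 2 - 2) +
      Fintype.card K ^ (p + 2 - 2) * Na K (2 * (s + 1) - 2) (p + 2 - 1) = minDist K s p := by
    rw [show p + 2 - 2 * (s + 1) = p - 2 * s by lia,
      show p + 2 + 2 * (s + 1) - 4 = p + 2 * s by lia, show 2 * (s + 1) - 2 = 2 * s by lia]
    rfl
  rw [hd]
  constructor
  · let φ : Matrix (Fin (p + 2)) (Fin (p + 2)) K →ₗ[K] K := Matrix.entryLinearMap K K 1 0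
    have hφ : ∀ (A : Matrix (Fin (p + 1)) (Fin (p + 1)) K) u, φ (border A u) = u 0 :=
      fun _ _ => rfl
    have hb : borderCoeff φ ≠ 0 := fun h => by
      have h0 := congrFun h 0
      rw [borderCoeff, hφ] at h0
      simp at h0
    have hw : (Fintype.card K - 1) * minDist K s p = affineWeight (p + 2) (s + 1) φ :=
      Nat.eq_of_mul_eq_mul_left Fintype.card_pos
        ((card_mul_minDist (by lia) hb).symm.trans (card_mul_affineWeight_eq hb fun A => hφ A 0))
    refine ⟨φ, ⟨border 0 (Pi.single 0 1), isSkewSym_border ⟨by simp, by simp⟩ _, ?_, ?_⟩,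
      Nat.eq_of_mul_eq_mul_left hq (hw.trans (card_units_mul_projWt _ _ _).symm)⟩
    · have h0 : IsSkewSym (0 : Matrix (Fin (p + 1)) (Fin (p + 1)) K) := ⟨by simp, by simp⟩
      by_cases h : Pi.single 0 1 ∈
          LinearMap.range (0 : Matrix (Fin (p + 1)) (Fin (p + 1)) K).mulVecLin
      · rw [rank_border_of_mem h0 h, Matrix.rank_zero]; lia
      · rw [rank_border_of_notMem h0 h, Matrix.rank_zero]; lia
    · rw [hφ]
      simp
  · rintro w ⟨φ, ⟨A, hA, -, hφA⟩, rfl⟩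
    obtain ⟨ψ, hψ, hw⟩ := exists_borderCoeff_ne_zero hchar (s + 1) hA hφA
    refine Nat.le_of_mul_le_mul_left ?_ hq
    rw [card_units_mul_projWt, ← hw]
    exact minDist_le_projWt (by lia) hψ
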